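/- arXiv:2108.08699 — 2 statements merged into one kernel-verified Lean document; each statement's English description precedes it below -/
import Mathlib

section
/- Let m, n be positive integers, and for each i = 1,…,m let ε_i ∈ {1, −1} and let w_{i,1},…,w_{i,n} be nonzero integers. For 0 ≤ l ≤ n define in ℚ(q): χ_l = ∑_{i=1}^m ε_i · σ_l(q^{w_{i,1}},…,q^{w_{i,n}}) / ∏_{j=1}^n (1 − q^{w_{i,j}}), and let χ_l' denote the same expression with every weight w_{i,j} replaced by −w_{i,j}. Then χ_l' = (−1)^n · χ_{n−l} for all 0 ≤ l ≤ n. -/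
/-- The `l`-th elementary symmetric polynomial evaluated at `t 0, …, t (n-1)`. -/
def esymm {K : Type*} [CommRing K] {n : ℕ} (l : ℕ) (t : Fin n → K) : K :=
  ∑ S ∈ Finset.powersetCard l (Finset.univ : Finset (Fin n)), ∏ j ∈ S, t j

/-!
Complementation of index sets turns `σ_l(t⁻¹) ∏ t_j` into `σ_{n-l}(t)`, while
`(1 - t_j⁻¹) t_j = -(1 - t_j)` turns `∏ (1 - t_j⁻¹) ∏ t_j` into `(-1)^n ∏ (1 - t_j)`. Hence
inverting all `t_j` exchanges the fractions for `l` and `n - l` up to `(-1)^n`; this holds for each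
fixed point separately, with `t_j = q^{w_{i,j}}`.
-/

theorem sum_powersetCard_compl {α M : Type*} [Fintype α] [DecidableEq α] [AddCommMonoid M]
    {l : ℕ} (hl : l ≤ Fintype.card α) (f : Finset α → M) :
    ∑ S ∈ Finset.powersetCard l Finset.univ, f Sᶜ =
      ∑ S ∈ Finset.powersetCard (Fintype.card α - l) Finset.univ, f S := by
  refine Finset.sum_equiv compl_involutive.toPerm (fun S => ?_) fun S _ => rfl
  have hS : S.card ≤ Fintype.card α := S.card_le_univ
  rw [compl_involutive.coe_toPerm, Finset.mem_powersetCard_univ, Finset.mem_powersetCard_univ,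
    Finset.card_compl]
  omega

theorem prod_mul_prod_univ_eq_prod_compl {α M : Type*} [Fintype α] [DecidableEq α] [CommMonoid M]
    {s t : α → M} {S : Finset α} (hst : ∀ j ∈ S, s j * t j = 1) :
    (∏ j ∈ S, s j) * ∏ j, t j = ∏ j ∈ Sᶜ, t j := by
  rw [← Finset.prod_mul_prod_compl S t, ← mul_assoc, ← Finset.prod_mul_distrib,
    Finset.prod_eq_one hst, one_mul]

section CommRing

variable {R : Type*} [CommRing R]

theorem esymm_mul_prod_eq_esymm_sub {n l : ℕ} (hl : l ≤ n) {s t : Fin n → R}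
    (hst : ∀ j, s j * t j = 1) :
    esymm l s * ∏ j, t j = esymm (n - l) t := by
  have reindex := sum_powersetCard_compl (hl.trans_eq (Fintype.card_fin n).symm)
    fun S => ∏ j ∈ S, t j
  rw [Fintype.card_fin] at reindex
  simp only [esymm, Finset.sum_mul, ← reindex,
    prod_mul_prod_univ_eq_prod_compl fun j _ => hst j]

theorem prod_one_sub_mul_prod {ι : Type*} {s t : ι → R} {S : Finset ι}
    (hst : ∀ j ∈ S, s j * t j = 1) :
    (∏ j ∈ S, (1 - s j)) * ∏ j ∈ S, t j = (-1) ^ S.card * ∏ j ∈ S, (1 - t j) := by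
  rw [← Finset.prod_mul_distrib, ← Finset.prod_neg]
  refine Finset.prod_congr rfl fun j hj => ?_
  rw [sub_mul, hst j hj, one_mul, neg_sub]

end CommRing

section Field

variable {K : Type*} [Field K] {n l : ℕ}

theorem ratFunc_X_zpow_ne_one {k : ℤ} (hk : k ≠ 0) : (RatFunc.X : RatFunc K) ^ k ≠ 1 := by
  classical
  intro h
  have hval : WithZero.exp k = 1 := by rw [← RatFunc.inftyValuation.X_zpow K k, h, map_one]
  exact hk (WithZero.exp_eq_one.mp hval)

theorem prod_one_sub_ne_zero {ι : Type*} [Fintype ι] {t : ι → K} (ht : ∀ j, t j ≠ 1) :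
    ∏ j, (1 - t j) ≠ 0 :=
  Finset.prod_ne_zero_iff.mpr fun j _ => sub_ne_zero.mpr (ht j).symm

theorem esymm_inv_div_prod_one_sub_inv (hl : l ≤ n) {t : Fin n → K}
    (ht₀ : ∀ j, t j ≠ 0) (ht₁ : ∀ j, t j ≠ 1) :
    esymm l (fun j => (t j)⁻¹) / ∏ j, (1 - (t j)⁻¹) =
      (-1) ^ n * (esymm (n - l) t / ∏ j, (1 - t j)) := by
  have hst (j : Fin n) : (t j)⁻¹ * t j = 1 := inv_mul_cancel₀ (ht₀ j)
  have hden : ∏ j, (1 - t j) ≠ 0 := prod_one_sub_ne_zero ht₁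
  have hden_inv : ∏ j, (1 - (t j)⁻¹) ≠ 0 :=
    prod_one_sub_ne_zero fun j => inv_ne_one.mpr (ht₁ j)
  have hprod : (∏ j, (1 - (t j)⁻¹)) * ∏ j, t j = (-1) ^ n * ∏ j, (1 - t j) := by
    simpa only [Finset.card_univ, Fintype.card_fin] using
      prod_one_sub_mul_prod (S := Finset.univ) fun j _ => hst j
  have hsign : (-1 : K) ^ n * (-1) ^ n = 1 := pow_mul_pow_eq_one n (by norm_num)
  rw [← mul_div_assoc, div_eq_div_iff hden_inv hden, ← esymm_mul_prod_eq_esymm_sub hl hst]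
  calc esymm l (fun j => (t j)⁻¹) * ∏ j, (1 - t j)
      = (-1) ^ n * esymm l (fun j => (t j)⁻¹) * ((-1) ^ n * ∏ j, (1 - t j)) := by
        rw [mul_mul_mul_comm, hsign, one_mul]
    _ = (-1) ^ n * (esymm l (fun j => (t j)⁻¹) * ∏ j, t j) * ∏ j, (1 - (t j)⁻¹) := by
        rw [← hprod]
        ring

theorem stmt_6_general {ι : Type*} [Fintype ι] (hl : l ≤ n) (c : ι → K) (t : ι → Fin n → K)
    (ht₀ : ∀ i j, t i j ≠ 0) (ht₁ : ∀ i j, t i j ≠ 1) :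
    ∑ i, c i * esymm l (fun j => (t i j)⁻¹) / ∏ j, (1 - (t i j)⁻¹) =
      (-1) ^ n * ∑ i, c i * esymm (n - l) (t i) / ∏ j, (1 - t i j) := by
  rw [Finset.mul_sum]
  refine Finset.sum_congr rfl fun i _ => ?_
  rw [mul_div_assoc, esymm_inv_div_prod_one_sub_inv hl (ht₀ i) (ht₁ i), mul_div_assoc,
    mul_left_comm]

end Field

/-- The rational-function identity of Lemma 2.3 of the paper, summed over all fixed
points with signs: replacing every weight by its negative in `χ_l` yields
`(-1)^n · χ_{n-l}`. -/
theorem stmt_6 (m n : ℕ) (hm : 0 < m) (hn : 0 < n)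
    (ε : Fin m → ℚ) (hε : ∀ i, ε i = 1 ∨ ε i = -1)
    (w : Fin m → Fin n → ℤ) (hw : ∀ i j, w i j ≠ 0)
    (l : ℕ) (hl : l ≤ n) :
    ∑ i, RatFunc.C (ε i) *
        esymm l (fun j => (RatFunc.X : RatFunc ℚ) ^ (-(w i j))) /
          ∏ j, (1 - (RatFunc.X : RatFunc ℚ) ^ (-(w i j)))
      = (-1) ^ n *
        ∑ i, RatFunc.C (ε i) *
          esymm (n - l) (fun j => (RatFunc.X : RatFunc ℚ) ^ (w i j)) /
            ∏ j, (1 - (RatFunc.X : RatFunc ℚ) ^ (w i j)) := by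
  simpa only [zpow_neg] using stmt_6_general hl (fun i => RatFunc.C (ε i))
    (fun i j => RatFunc.X ^ w i j) (fun i j => zpow_ne_zero (w i j) RatFunc.X_ne_zero)
    (fun i j => ratFunc_X_zpow_ne_one (hw i j))
end

section
/- Let m, n be positive integers, let 0 ≤ l ≤ n, and for each i = 1,…,m let ε_i ∈ {1, −1} and let w_{i,1},…,w_{i,n} be nonzero integers. Let n_l^+ be the number of indices i with ε_i = 1 and #{j : w_{i,j} < 0} = l, and n_l^− the number of indices i with ε_i = −1 and #{j : w_{i,j} < 0} = l. Suppose there is a real constant c such that for every real q with 0 < q < 1 one has ∑_{i=1}^m ε_i · σ_l(q^{w_{i,1}},…,q^{w_{i,n}}) / ∏_{j=1}^n (1 − q^{w_{i,j}}) = c. Then c = (−1)^l · (n_l^+ − n_l^−). -/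
/-!
Let `q → 0`. Expanding `σ_l` over the `l`-subsets `S` turns the contribution of one fixed point
into `∑ S, ∏_{j ∈ S} q^{w_j} / (1 - q^{w_j}) * ∏_{j ∉ S} 1 / (1 - q^{w_j})`. The factors with
`j ∈ S` tend to `-1` if `w_j < 0` and to `0` if `w_j > 0`; those with `j ∉ S` tend to `0` and `1`
respectively. Hence only `S = {j | w_j < 0}` survives, and it contributes `(-1)^l` exactly when it
has `l` elements.
-/

section

open Filter Finset Topology

section Algebra

theorem esymm_div_prod_one_sub {K : Type*} [Field K] {n : ℕ} (l : ℕ) (t : Fin n → K) :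
    esymm l t / ∏ j, (1 - t j) =
      ∑ S ∈ powersetCard l univ, (∏ j ∈ S, t j / (1 - t j)) * ∏ j ∈ Sᶜ, (1 - t j)⁻¹ := by
  rw [esymm, sum_div]
  refine sum_congr rfl fun S _ => ?_
  rw [prod_div_distrib, prod_inv_distrib, ← prod_mul_prod_compl S, ← div_div, ← div_eq_mul_inv]

theorem prod_ite_neg_one_mul_prod_compl_ite {R σ : Type*} [CommRing R] [Fintype σ] [DecidableEq σ]
    (p : σ → Prop) [DecidablePred p] (S : Finset σ) :
    (∏ j ∈ S, if p j then (-1 : R) else 0) * ∏ j ∈ Sᶜ, (if p j then 0 else 1) =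
      if S = univ.filter p then (-1) ^ #S else 0 := by
  have hS : S = univ.filter p ↔ (∀ j ∈ S, p j) ∧ ∀ j ∈ Sᶜ, ¬p j := by
    simp only [Finset.ext_iff, mem_filter_univ, mem_compl]
    grind
  simp only [hS, ← ite_not (p _) (1 : R), prod_ite_zero, prod_const, one_pow]
  rw [ite_zero_mul_ite_zero, mul_one]

theorem sum_filter_eq_card_one_sub_card_neg_one {R ι : Type*} [Ring R] [NeZero (2 : R)]
    [DecidableEq R] (s : Finset ι) (p : ι → Prop) [DecidablePred p] (ε : ι → R)
    (hε : ∀ i ∈ s, p i → ε i = 1 ∨ ε i = -1) :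
    ∑ i ∈ s with p i, ε i = (#{i ∈ s | ε i = 1 ∧ p i} : R) - #{i ∈ s | ε i = -1 ∧ p i} := by
  have one_ne_neg_one : (1 : R) ≠ -1 := fun h =>
    two_ne_zero (α := R) (by rw [← one_add_one_eq_two, ← eq_neg_iff_add_eq_zero, ← h])
  rw [← sum_boole, ← sum_boole, ← sum_sub_distrib, sum_filter]
  refine sum_congr rfl fun i hi => ?_
  by_cases hp : p i
  · rcases hε i hi hp with h | h <;> simp [h, hp, one_ne_neg_one, one_ne_neg_one.symm]
  · simp [hp]

theorem inv_one_sub_inv {K : Type*} [Field K] {t : K} (ht : t ≠ 0) :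
    (1 - t⁻¹)⁻¹ = -(t / (1 - t)) := by
  have one_sub_inv : 1 - t⁻¹ = -(1 - t) / t := by
    field_simp
    ring
  rw [one_sub_inv, inv_div, div_neg]

end Algebra

section Limits

variable {K : Type*} [Field K] [TopologicalSpace K] [IsTopologicalDivisionRing K] {w : ℤ}

theorem tendsto_zpow_nhdsNE_zero (hw : 0 < w) :
    Tendsto (fun q : K => q ^ w) (𝓝[≠] 0) (𝓝 0) := by
  have h := (continuousAt_zpow₀ (0 : K) w (.inr hw.le)).tendsto
  rw [zero_zpow w hw.ne'] at h
  exact h.mono_left nhdsWithin_le_nhds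

theorem tendsto_inv_one_sub_zpow_of_pos (hw : 0 < w) :
    Tendsto (fun q : K => (1 - q ^ w)⁻¹) (𝓝[≠] 0) (𝓝 1) := by
  simpa using ((tendsto_zpow_nhdsNE_zero (K := K) hw).const_sub 1).inv₀ (by simp)

theorem tendsto_zpow_div_one_sub_zpow_of_pos (hw : 0 < w) :
    Tendsto (fun q : K => q ^ w / (1 - q ^ w)) (𝓝[≠] 0) (𝓝 0) := by
  simpa [div_eq_mul_inv] using
    (tendsto_zpow_nhdsNE_zero (K := K) hw).mul (tendsto_inv_one_sub_zpow_of_pos hw)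

-- For `w < 0` the substitution `t ↦ t⁻¹` exchanges `t / (1 - t)` and `1 / (1 - t)` up to sign.
theorem tendsto_zpow_div_one_sub_zpow (hw : w ≠ 0) :
    Tendsto (fun q : K => q ^ w / (1 - q ^ w)) (𝓝[≠] 0) (𝓝 (if w < 0 then -1 else 0)) := by
  rcases hw.lt_or_gt with hneg | hpos
  · rw [if_pos hneg]
    refine (tendsto_inv_one_sub_zpow_of_pos (neg_pos.2 hneg)).neg.congr' ?_
    filter_upwards [self_mem_nhdsWithin] with q hq
    rw [zpow_neg, inv_one_sub_inv (zpow_ne_zero w hq), neg_neg]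
  · rw [if_neg hpos.not_gt]
    exact tendsto_zpow_div_one_sub_zpow_of_pos hpos

theorem tendsto_inv_one_sub_zpow (hw : w ≠ 0) :
    Tendsto (fun q : K => (1 - q ^ w)⁻¹) (𝓝[≠] 0) (𝓝 (if w < 0 then 0 else 1)) := by
  rcases hw.lt_or_gt with hneg | hpos
  · have hlim := (tendsto_zpow_div_one_sub_zpow_of_pos (K := K) (neg_pos.2 hneg)).neg
    rw [neg_zero] at hlim
    rw [if_pos hneg]
    refine hlim.congr' ?_
    filter_upwards [self_mem_nhdsWithin] with q hq
    rw [← inv_one_sub_inv (zpow_ne_zero _ hq), zpow_neg, inv_inv]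
  · rw [if_neg hpos.not_gt]
    exact tendsto_inv_one_sub_zpow_of_pos hpos

theorem tendsto_esymm_zpow_div_prod_one_sub_zpow {n : ℕ} (l : ℕ) (w : Fin n → ℤ)
    (hw : ∀ j, w j ≠ 0) :
    Tendsto (fun q : K => esymm l (fun j => q ^ w j) / ∏ j, (1 - q ^ w j)) (𝓝[≠] 0)
      (𝓝 (if #{j | w j < 0} = l then (-1) ^ l else 0)) := by
  have limit_eq : ∑ S ∈ powersetCard l univ,
      (∏ j ∈ S, if w j < 0 then (-1 : K) else 0) * ∏ j ∈ Sᶜ, (if w j < 0 then 0 else 1) =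
        if #{j | w j < 0} = l then (-1) ^ l else 0 := by
    simp only [prod_ite_neg_one_mul_prod_compl_ite, sum_ite_eq', mem_powersetCard_univ]
    exact ite_congr rfl (fun h => by rw [h]) fun _ => rfl
  simp only [esymm_div_prod_one_sub, ← limit_eq]
  exact tendsto_finsetSum _ fun S _ =>
    (tendsto_finsetProd _ fun j _ => tendsto_zpow_div_one_sub_zpow (hw j)).mul
      (tendsto_finsetProd _ fun j _ => tendsto_inv_one_sub_zpow (hw j))

theorem tendsto_sum_mul_esymm_zpow_div_prod_one_sub_zpow {ι : Type*} (s : Finset ι) {n : ℕ} (l : ℕ)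
    (ε : ι → K) (w : ι → Fin n → ℤ) (hw : ∀ i ∈ s, ∀ j, w i j ≠ 0) :
    Tendsto (fun q : K => ∑ i ∈ s, ε i * esymm l (fun j => q ^ w i j) / ∏ j, (1 - q ^ w i j))
      (𝓝[≠] 0) (𝓝 ((-1) ^ l * ∑ i ∈ s with #{j | w i j < 0} = l, ε i)) := by
  have limit_eq : (-1) ^ l * ∑ i ∈ s with #{j | w i j < 0} = l, ε i =
      ∑ i ∈ s, ε i * if #{j | w i j < 0} = l then (-1) ^ l else 0 := by
    rw [mul_comm, sum_filter, sum_mul]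
    simp only [ite_mul, zero_mul, mul_ite, mul_zero]
  simp only [limit_eq, mul_div_assoc]
  exact tendsto_finsetSum _ fun i hi =>
    (tendsto_esymm_zpow_div_prod_one_sub_zpow l (w i) (hw i hi)).const_mul (ε i)

theorem stmt_11_general [T1Space K] {ι : Type*} (s : Finset ι) {n : ℕ} (l : ℕ)
    (ε : ι → K) (w : ι → Fin n → ℤ) (hw : ∀ i ∈ s, ∀ j, w i j ≠ 0) (c : K)
    (hc : ∃ᶠ q in 𝓝[≠] (0 : K),
      ∑ i ∈ s, ε i * esymm l (fun j => q ^ w i j) / ∏ j, (1 - q ^ w i j) = c) :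
    c = (-1) ^ l * ∑ i ∈ s with #{j | w i j < 0} = l, ε i :=
  (isClosed_singleton.mem_of_frequently_of_tendsto hc
    (tendsto_sum_mul_esymm_zpow_div_prod_one_sub_zpow s l ε w hw)).symm

end Limits

theorem frequently_nhdsNE_of_forall_between {α : Type*} [LinearOrder α] [TopologicalSpace α]
    [OrderTopology α] [DenselyOrdered α] {a b : α} (hab : a < b) {P : α → Prop}
    (hP : ∀ x, a < x → x < b → P x) : ∃ᶠ x in 𝓝[≠] a, P x := by
  have : (𝓝[>] a).NeBot := nhdsGT_neBot_of_exists_gt ⟨b, hab⟩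
  have eventually_right : ∀ᶠ x in 𝓝[>] a, P x := by
    filter_upwards [Ioo_mem_nhdsGT hab] with x hx using hP x hx.1 hx.2
  exact eventually_right.frequently.filter_mono (nhdsWithin_mono a fun _ hx => ne_of_gt hx)

end

/-- The formula `χ^l(M) = (-1)^l (n_l^+ - n_l^-)` from Section 4 of the paper, with
rigidity (constancy in `q` of the fixed-point sum) taken as a hypothesis. -/
theorem stmt_11 (m n : ℕ) (hm : 0 < m) (hn : 0 < n) (l : ℕ) (hl : l ≤ n)
    (ε : Fin m → ℝ) (hε : ∀ i, ε i = 1 ∨ ε i = -1)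
    (w : Fin m → Fin n → ℤ) (hw : ∀ i j, w i j ≠ 0)
    (nplus nminus : ℕ)
    (hplus : nplus = (Finset.univ.filter fun i =>
      ε i = 1 ∧ (Finset.univ.filter fun j => w i j < 0).card = l).card)
    (hminus : nminus = (Finset.univ.filter fun i =>
      ε i = -1 ∧ (Finset.univ.filter fun j => w i j < 0).card = l).card)
    (c : ℝ)
    (hc : ∀ q : ℝ, 0 < q → q < 1 →
      ∑ i, ε i * esymm l (fun j => q ^ (w i j)) / ∏ j, (1 - q ^ (w i j)) = c) :
    c = (-1) ^ l * ((nplus : ℝ) - (nminus : ℝ)) := by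
  rw [hplus, hminus, ← sum_filter_eq_card_one_sub_card_neg_one _ _ ε fun i _ _ => hε i]
  exact stmt_11_general _ l ε w (fun i _ => hw i) c
    (frequently_nhdsNE_of_forall_between zero_lt_one hc)
end
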